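/- Let f be an irreducible homogeneous polynomial of even degree in k[x₀,x₁,x₂], and let F ∈ S be homogeneous with θ(F) = f. If G ∈ S is homogeneous and θ(G) lies in the ideal (f) of k[x₀,x₁,x₂], then G lies in the ideal of S generated by F and the six minors Δ_{ij}, 0 ≤ i ≤ j ≤ 2. -/

import Mathlib

/-!
A monomial of even degree in the `xᵢ` is the image under `θ` of the product of the `x_{ij}` over any
way of pairing off its factors. Modulo the `2 × 2` minors this product does not depend on the
pairing, because exchanging the partners of two pairs is exactly the relation given by a minor.
Hence, for every ideal `J` of `S` containing the minors, pairing off even monomials and killing the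
odd ones is an `S`-linear map `k[x₀, x₁, x₂] → S ⧸ J` which sends `1` to `1`, and therefore `J` is
the contraction of its extension along `θ`. The case `J = (F, Δ)` is the theorem.
-/

open MvPolynomial

noncomputable def theta (k : Type*) [CommRing k] :
    MvPolynomial (Fin 6) k →ₐ[k] MvPolynomial (Fin 3) k :=
  MvPolynomial.aeval
    ![X 0 * X 0, X 0 * X 1, X 0 * X 2, X 1 * X 1, X 1 * X 2, X 2 * X 2]

noncomputable def Delta (k : Type*) [CommRing k] : Fin 6 → MvPolynomial (Fin 6) k :=
  ![X 3 * X 5 - X 4 * X 4,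
    X 1 * X 5 - X 4 * X 2,
    X 1 * X 4 - X 2 * X 3,
    X 0 * X 5 - X 2 * X 2,
    X 0 * X 4 - X 2 * X 1,
    X 0 * X 3 - X 1 * X 1]

section SymmRankLeOne

variable {ι A : Type*}

/-- A symmetric matrix all of whose `2 × 2` minors vanish. The minors are written without
subtraction, and with the symmetry built in, as invariance of `Y i j * Y k l` under exchanging `j`
and `k`. -/
structure IsSymmRankLeOne [Mul A] (Y : Matrix ι ι A) : Prop where
  apply_comm (i j : ι) : Y i j = Y j i
  exchange (i j k l : ι) : Y i j * Y k l = Y i k * Y j l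

/-- The product of the entries of `Y` indexed by the consecutive pairs of a list, with the value `0`
on lists of odd length. -/
def pairProd [MonoidWithZero A] (Y : Matrix ι ι A) : List ι → A
  | [] => 1
  | [_] => 0
  | i :: j :: l => Y i j * pairProd Y l

namespace IsSymmRankLeOne

section PairProd

variable [MonoidWithZero A] {Y : Matrix ι ι A}

lemma pairProd_eq_and_pairProd_cons_eq_of_perm (hY : IsSymmRankLeOne Y) {l l' : List ι}
    (h : l.Perm l') :
    pairProd Y l = pairProd Y l' ∧ ∀ i, pairProd Y (i :: l) = pairProd Y (i :: l') := by
  -- Prepending an element shifts all the pairs, so the two equalities need a joint induction.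
  induction h with
  | nil => exact ⟨rfl, fun _ => rfl⟩
  | cons j _ ih => exact ⟨ih.2 j, fun i => congrArg (Y i j * ·) ih.1⟩
  | swap j k l =>
    refine ⟨congrArg (· * pairProd Y l) (hY.apply_comm k j), fun i => ?_⟩
    cases l with
    | nil => simp [pairProd]
    | cons m l => simp only [pairProd, ← mul_assoc, hY.exchange i k j m]
  | trans _ _ ih ih' => exact ⟨ih.1.trans ih'.1, fun i => (ih.2 i).trans (ih'.2 i)⟩

variable (hY : IsSymmRankLeOne Y)

/-- The function induced by `pairProd` on multisets: the common value of the product over all ways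
of pairing off the elements, and `0` if their number is odd. -/
def multisetPairProd (s : Multiset ι) : A :=
  Quot.liftOn s (pairProd Y) fun _ _ h => (hY.pairProd_eq_and_pairProd_cons_eq_of_perm h).1

lemma multisetPairProd_zero : hY.multisetPairProd 0 = 1 :=
  rfl

lemma multisetPairProd_cons_cons (i j : ι) (s : Multiset ι) :
    hY.multisetPairProd (i ::ₘ j ::ₘ s) = Y i j * hY.multisetPairProd s :=
  Quot.inductionOn s fun _ => rfl

end PairProd

section Pairing

variable (R : Type*) [CommSemiring R] [Semiring A] [Algebra R A] {Y : Matrix ι ι A}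
  (hY : IsSymmRankLeOne Y)

/-- The linear map replacing each monomial by the product of the entries of `Y` over a pairing of
its factors, and killing the monomials of odd degree. When `Y` is the symmetric matrix of the
variables of the second Veronese ring, it is a retraction of the polynomial ring onto that ring. -/
noncomputable def pairing : MvPolynomial ι R →ₗ[R] A :=
  (basisMonomials ι R).constr R fun d => hY.multisetPairProd (Finsupp.toMultiset d)

lemma pairing_monomial (d : ι →₀ ℕ) :
    hY.pairing R (monomial d 1) = hY.multisetPairProd (Finsupp.toMultiset d) :=
  (basisMonomials ι R).constr_basis R _ d

lemma pairing_one : hY.pairing R 1 = 1 :=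
  (hY.pairing_monomial R 0).trans (by rw [map_zero, multisetPairProd_zero])

lemma pairing_X_mul_X_mul (i j : ι) (p : MvPolynomial ι R) :
    hY.pairing R (X i * X j * p) = Y i j * hY.pairing R p := by
  suffices hY.pairing R ∘ₗ LinearMap.mulLeft R (X i * X j) =
      LinearMap.mulLeft R (Y i j) ∘ₗ hY.pairing R from LinearMap.congr_fun this p
  refine (basisMonomials ι R).ext fun d => ?_
  have hd : X i * X j * monomial d (1 : R) =
      monomial (Finsupp.single i 1 + Finsupp.single j 1 + d) 1 := by
    simp only [X, monomial_mul, one_mul]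
  simp only [coe_basisMonomials, LinearMap.comp_apply, LinearMap.mulLeft_apply, hd,
    pairing_monomial, map_add, Finsupp.toMultiset_single, one_smul, add_assoc,
    Multiset.singleton_add, multisetPairProd_cons_cons]

end Pairing

end IsSymmRankLeOne

end SymmRankLeOne

lemma comap_map_eq_self_of_linear_to_quotient {S B : Type*} [CommRing S] [CommRing B]
    (φ : S →+* B) {I : Ideal S} (ρ : B →+ S ⧸ I) (hone : ρ 1 = 1)
    (hmul : ∀ s b, ρ (φ s * b) = Ideal.Quotient.mk I s * ρ b) :
    (I.map φ).comap φ = I := by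
  have hρ : ∀ b ∈ I.map φ, ρ b = 0 := fun b hb => by
    induction hb using Submodule.closure_induction with
    | zero => exact map_zero ρ
    | add b c _ _ hb hc => rw [map_add, hb, hc, add_zero]
    | smul_mem b c hc =>
      obtain ⟨s, hs, rfl⟩ := hc
      rw [smul_eq_mul, mul_comm, hmul, Ideal.Quotient.eq_zero_iff_mem.mpr hs, zero_mul]
  refine le_antisymm (fun s hs => Ideal.Quotient.eq_zero_iff_mem.mp ?_) Ideal.le_comap_map
  calc Ideal.Quotient.mk I s = ρ (φ s * 1) := by rw [hmul, hone, mul_one]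
    _ = 0 := by rw [mul_one, hρ _ hs]

section Veronese

/-- The symmetric `3 × 3` matrix whose upper triangle, read row by row, is `y`. With this convention
the indices `0, …, 5` of the variables of `S` stand for `00, 01, 02, 11, 12, 22`. -/
def symmMatrix {A : Type*} (y : Fin 6 → A) : Matrix (Fin 3) (Fin 3) A :=
  !![y 0, y 1, y 2; y 1, y 3, y 4; y 2, y 4, y 5]

lemma exists_theta_X_eq_X_mul_X {k A : Type*} [CommRing k] (y : Fin 6 → A) (n : Fin 6) :
    ∃ i j, theta k (X n) = X i * X j ∧ symmMatrix y i j = y n := by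
  simp only [theta, aeval_X]
  fin_cases n
  exacts [⟨0, 0, rfl, rfl⟩, ⟨0, 1, rfl, rfl⟩, ⟨0, 2, rfl, rfl⟩, ⟨1, 1, rfl, rfl⟩, ⟨1, 2, rfl, rfl⟩,
    ⟨2, 2, rfl, rfl⟩]

variable {k A : Type*} [CommRing k] [CommRing A] [Algebra k A]

lemma isSymmRankLeOne_symmMatrix {y : Fin 6 → A} (hy : ∀ j, aeval y (Delta k j) = 0) :
    IsSymmRankLeOne (symmMatrix y) where
  apply_comm i j := by fin_cases i <;> fin_cases j <;> rfl
  exchange i j r s := by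
    obtain ⟨h₀, h₁, h₂, h₃, h₄, h₅⟩ : y 3 * y 5 = y 4 * y 4 ∧ y 1 * y 5 = y 4 * y 2 ∧
        y 1 * y 4 = y 2 * y 3 ∧ y 0 * y 5 = y 2 * y 2 ∧ y 0 * y 4 = y 2 * y 1 ∧
        y 0 * y 3 = y 1 * y 1 := by
      simpa [Delta, Fin.forall_fin_succ, sub_eq_zero] using hy
    fin_cases i <;> fin_cases j <;> fin_cases r <;> fin_cases s <;>
      simp only [symmMatrix, Fin.zero_eta, Fin.mk_one, Fin.reduceFinMk, Matrix.of_apply,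
        Matrix.cons_val] <;>
      grind

lemma pairing_theta_mul {y : Fin 6 → A} (hy : IsSymmRankLeOne (symmMatrix y))
    (p : MvPolynomial (Fin 6) k) (q : MvPolynomial (Fin 3) k) :
    hy.pairing k (theta k p * q) = aeval y p * hy.pairing k q := by
  induction p using MvPolynomial.induction_on generalizing q with
  | C c => simp only [algHom_C, ← Algebra.smul_def, map_smul]
  | add p p' hp hp' => simp only [map_add, add_mul, hp, hp']
  | mul_X p n hp =>
    obtain ⟨i, j, hθ, hn⟩ := exists_theta_X_eq_X_mul_X (k := k) y n
    rw [map_mul (theta k), mul_assoc, hp, hθ, hy.pairing_X_mul_X_mul k, hn,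
      map_mul (aeval (R := k) y), aeval_X, mul_assoc]

lemma comap_map_theta_eq_self {J : Ideal (MvPolynomial (Fin 6) k)} (hJ : ∀ j, Delta k j ∈ J) :
    (J.map (theta k)).comap (theta k) = J := by
  set π := Ideal.Quotient.mkₐ k J
  have aeval_mk (p : MvPolynomial (Fin 6) k) : aeval (fun i => π (X i)) p = π p :=
    (DFunLike.congr_fun (aeval_unique π) p).symm
  have hy : IsSymmRankLeOne (symmMatrix fun i => π (X i)) :=
    isSymmRankLeOne_symmMatrix fun j =>
      (aeval_mk (Delta k j)).trans (Ideal.Quotient.eq_zero_iff_mem.mpr (hJ j))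
  refine comap_map_eq_self_of_linear_to_quotient (theta k).toRingHom (hy.pairing k).toAddMonoidHom
    (hy.pairing_one k) fun p q => ?_
  exact (pairing_theta_mul hy p q).trans (by rw [aeval_mk]; rfl)

theorem mem_span_F_minors_general {f : MvPolynomial (Fin 3) k} {F G : MvPolynomial (Fin 6) k}
    (hθF : theta k F = f) (hθG : theta k G ∈ Ideal.span {f}) :
    G ∈ Ideal.span (insert F (Set.range (Delta k))) := by
  set J := Ideal.span (insert F (Set.range (Delta k)))
  have hF : F ∈ J := Ideal.subset_span (Set.mem_insert _ _)
  have hΔ (j) : Delta k j ∈ J := Ideal.subset_span (Set.mem_insert_of_mem _ ⟨j, rfl⟩)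
  have hf : Ideal.span {f} ≤ J.map (theta k) :=
    (Ideal.span_singleton_le_iff_mem _).mpr (hθF ▸ Ideal.mem_map_of_mem _ hF)
  rw [← comap_map_theta_eq_self hΔ]
  exact hf hθG

end Veronese

theorem mem_span_F_minors (k : Type*) [Field k] [IsAlgClosed k]
    (f : MvPolynomial (Fin 3) k) (m : ℕ) (hfirr : Irreducible f)
    (hf : f.IsHomogeneous (2 * m))
    (F : MvPolynomial (Fin 6) k) (n : ℕ) (hF : F.IsHomogeneous n)
    (hθF : theta k F = f)
    (G : MvPolynomial (Fin 6) k) (n' : ℕ) (hG : G.IsHomogeneous n')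
    (hθG : theta k G ∈ Ideal.span {f}) :
    G ∈ Ideal.span (insert F (Set.range (Delta k))) := by
  exact mem_span_F_minors_general hθF hθG
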